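/- Let G be a strongly uncontrollable graph on vertex set {1,…,n} whose Laplacian eigenvalues are all strictly less than n, and let G̃ be the graph on {1,…,n+1} obtained from G by adding the new vertex n+1 adjacent to every vertex of G. Then a permutation σ of {1,…,n+1} is an automorphism of G̃ if and only if σ(n+1) = n+1 and the restriction of σ to {1,…,n} is an automorphism of G; consequently Aut(G) and Aut(G̃) are equal when viewed as subgroups of the symmetric group S_{n+1}. -/

import Mathlib

open Classical Matrix

noncomputable def lap {n : ℕ} (G : SimpleGraph (Fin n)) : Matrix (Fin n) (Fin n) ℝ :=
  Matrix.of fun i j =>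
    (if i = j then ((G.neighborSet i).ncard : ℝ) else 0) - (if G.Adj i j then 1 else 0)

def IsTwin {n : ℕ} (G : SimpleGraph (Fin n)) (u v : Fin n) : Prop :=
  u ≠ v ∧ G.neighborSet u \ {v} = G.neighborSet v \ {u}

def IsEigenvalue {n : ℕ} (M : Matrix (Fin n) (Fin n) ℝ) (μ : ℝ) : Prop :=
  ∃ x : Fin n → ℝ, x ≠ 0 ∧ M.mulVec x = μ • x

def HasSimpleSpectrum {n : ℕ} (M : Matrix (Fin n) (Fin n) ℝ) : Prop :=
  ∃ μ : Fin n → ℝ, Function.Injective μ ∧ ∀ i, IsEigenvalue M (μ i)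

def Controllable {n : ℕ} (M : Matrix (Fin n) (Fin n) ℝ) (b : Fin n → ℝ) : Prop :=
  Submodule.span ℝ (Set.range fun k : Fin n => (M ^ (k : ℕ)).mulVec b) = ⊤

def StronglyUncontrollable {n : ℕ} (G : SimpleGraph (Fin n)) : Prop :=
  G.Connected ∧ HasSimpleSpectrum (lap G) ∧
    ∀ b : Fin n → ℝ, (∀ i, b i = 0 ∨ b i = 1) → ¬ Controllable (lap G) b

def Pmat {n k : ℕ} (c : Fin n → Fin k) : Matrix (Fin n) (Fin k) ℝ :=
  Matrix.of fun i j => if c i = j then 1 else 0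

def IsAEP {n k : ℕ} (G : SimpleGraph (Fin n)) (c : Fin n → Fin k) : Prop :=
  ∀ i j : Fin k, i ≠ j → ∀ x y : Fin n, c x = i → c y = i →
    (G.neighborSet x ∩ {z | c z = j}).ncard = (G.neighborSet y ∩ {z | c z = j}).ncard

noncomputable def quotLap {n k : ℕ} (G : SimpleGraph (Fin n)) (c : Fin n → Fin k) :
    Matrix (Fin k) (Fin k) ℝ :=
  ((Pmat c)ᵀ * Pmat c)⁻¹ * (Pmat c)ᵀ * lap G * Pmat c

def IsQuotAEP {k m : ℕ} (Lq : Matrix (Fin k) (Fin k) ℝ) (r : Fin k → Fin m) : Prop :=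
  ∀ a b : Fin m, a ≠ b → ∀ C C' : Fin k, r C = a → r C' = a →
    ∑ C'' ∈ Finset.univ.filter (fun C'' => r C'' = b), Lq C C'' =
      ∑ C'' ∈ Finset.univ.filter (fun C'' => r C'' = b), Lq C' C''

def IsGraphAut {n : ℕ} (G : SimpleGraph (Fin n)) (σ : Equiv.Perm (Fin n)) : Prop :=
  ∀ x y, G.Adj x y ↔ G.Adj (σ x) (σ y)

def joinOne {n : ℕ} (G : SimpleGraph (Fin n)) : SimpleGraph (Fin (n + 1)) where
  Adj x y := x ≠ y ∧ ((x : ℕ) = n ∨ (y : ℕ) = n ∨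
    ∃ (hx : (x : ℕ) < n) (hy : (y : ℕ) < n), G.Adj ⟨x, hx⟩ ⟨y, hy⟩)
  symm := by
    constructor
    rintro x y ⟨hxy, h⟩
    refine ⟨hxy.symm, ?_⟩
    rcases h with h | h | ⟨hx, hy, h⟩
    exacts [Or.inr (Or.inl h), Or.inl h, Or.inr (Or.inr ⟨hy, hx, h.symm⟩)]
  loopless := ⟨fun x h => h.1 rfl⟩

def joinTwo {n : ℕ} (G : SimpleGraph (Fin n)) : SimpleGraph (Fin (n + 2)) where
  Adj x y := x ≠ y ∧ (((x : ℕ) < n ∧ n ≤ (y : ℕ)) ∨ ((y : ℕ) < n ∧ n ≤ (x : ℕ)) ∨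
    ∃ (hx : (x : ℕ) < n) (hy : (y : ℕ) < n), G.Adj ⟨x, hx⟩ ⟨y, hy⟩)
  symm := by
    constructor
    rintro x y ⟨hxy, h⟩
    refine ⟨hxy.symm, ?_⟩
    rcases h with h | h | ⟨hx, hy, h⟩
    exacts [Or.inr (Or.inl h), Or.inl h, Or.inr (Or.inr ⟨hy, hx, h.symm⟩)]
  loopless := ⟨fun x h => h.1 rfl⟩

def addPendant {n : ℕ} (G : SimpleGraph (Fin n)) (v : Fin n) : SimpleGraph (Fin (n + 1)) where
  Adj x y := ((x : ℕ) = n ∧ (y : ℕ) = (v : ℕ)) ∨ ((y : ℕ) = n ∧ (x : ℕ) = (v : ℕ)) ∨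
    ∃ (hx : (x : ℕ) < n) (hy : (y : ℕ) < n), G.Adj ⟨x, hx⟩ ⟨y, hy⟩
  symm := by
    constructor
    rintro x y (h | h | ⟨hx, hy, h⟩)
    exacts [Or.inr (Or.inl h), Or.inl h, Or.inr (Or.inr ⟨hy, hx, h.symm⟩)]
  loopless := by
    constructor
    intro x h
    have hv := v.isLt
    rcases h with ⟨h1, h2⟩ | ⟨h1, h2⟩ | ⟨hx, hy, h⟩
    · omega
    · omega
    · exact G.loopless.irrefl _ h

/-!
A universal vertex `v` of a graph on `n ≥ 2` vertices produces the Laplacian eigenvalue `n`: since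
`L eᵥ = n eᵥ - 1` and `L 1 = 0`, the vector `L eᵥ` is an eigenvector. So when all eigenvalues are
less than `n`, the graph `G` has no universal vertex, and the cone vertex is the only one in the
join. Automorphisms permute universal vertices, hence fix the cone vertex and restrict to `G`.
The one-vertex graph, whose only eigenvalue is `0 < 1`, has to be excluded separately: it is
controllable from `b = 1`.
-/

section UniversalVertex

variable {V : Type*} {G : SimpleGraph V} {v : V}

theorem isUniversal_map_iff {W : Type*} {H : SimpleGraph W} (e : G ≃g H) :
    H.IsUniversal (e v) ↔ G.IsUniversal v := by
  simp only [SimpleGraph.IsUniversal, e.surjective.forall, e.injective.ne_iff, e.map_adj_iff]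

variable [Fintype V] [DecidableEq V] [DecidableRel G.Adj] {R : Type*}

theorem lapMatrix_col_of_isUniversal [AddGroupWithOne R] (hv : G.IsUniversal v) :
    (G.lapMatrix R).col v = Fintype.card V • Pi.single v 1 - 1 := by
  ext w
  obtain rfl | hw := eq_or_ne w v
  · have hdeg : G.degree w = Fintype.card V - 1 := (G.degree_eq_card_sub_one w).2 hv
    have hcard : 1 ≤ Fintype.card V := Fintype.card_pos_iff.2 ⟨w⟩
    simp [SimpleGraph.lapMatrix, SimpleGraph.degMatrix, hdeg, Nat.cast_sub hcard]
  · simp [SimpleGraph.lapMatrix, SimpleGraph.degMatrix, hw, (hv hw.symm).symm]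

theorem lapMatrix_mulVec_col_of_isUniversal [NonAssocRing R] (hv : G.IsUniversal v) :
    G.lapMatrix R *ᵥ (G.lapMatrix R).col v = Fintype.card V • (G.lapMatrix R).col v := by
  have hone : G.lapMatrix R *ᵥ 1 = 0 := G.lapMatrix_mulVec_const_eq_zero
  conv_lhs => rw [lapMatrix_col_of_isUniversal hv, mulVec_sub, hone, sub_zero, mulVec_smul,
    mulVec_single_one]

theorem lapMatrix_col_ne_zero_of_isUniversal [Nontrivial V] [AddGroupWithOne R] [NeZero (1 : R)]
    (hv : G.IsUniversal v) : (G.lapMatrix R).col v ≠ 0 := by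
  obtain ⟨w, hw⟩ := exists_ne v
  rw [lapMatrix_col_of_isUniversal hv]
  exact Function.ne_iff.2 ⟨w, by simp [hw]⟩

end UniversalVertex

section Laplacian

variable {n : ℕ} {G : SimpleGraph (Fin n)}

theorem lap_eq_lapMatrix (G : SimpleGraph (Fin n)) : lap G = G.lapMatrix ℝ := by
  ext i j
  simp [lap, SimpleGraph.lapMatrix, SimpleGraph.degMatrix, diagonal_apply,
    Set.ncard_eq_toFinset_card', SimpleGraph.degree, SimpleGraph.neighborFinset]

theorem isEigenvalue_lap_of_isUniversal (hn : n ≠ 1) {v : Fin n} (hv : G.IsUniversal v) :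
    IsEigenvalue (lap G) n := by
  have : Nontrivial (Fin n) := Fin.nontrivial_iff_two_le.2 (by have := v.isLt; omega)
  refine ⟨(lap G).col v, ?_, ?_⟩ <;> rw [lap_eq_lapMatrix]
  · exact lapMatrix_col_ne_zero_of_isUniversal hv
  · simpa [Nat.cast_smul_eq_nsmul] using lapMatrix_mulVec_col_of_isUniversal (R := ℝ) hv

theorem controllable_fin_one (M : Matrix (Fin 1) (Fin 1) ℝ) {b : Fin 1 → ℝ} (hb : b ≠ 0) :
    Controllable M b := by
  have hspan : Submodule.span ℝ {b} = ⊤ := (finrank_eq_one_iff_of_nonzero b hb).1 (by simp)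
  simpa [Controllable, Set.range_unique] using hspan

theorem StronglyUncontrollable.ne_one (hG : StronglyUncontrollable G) : n ≠ 1 := by
  rintro rfl
  exact hG.2.2 1 (fun _ => Or.inr rfl) (controllable_fin_one (lap G) one_ne_zero)

end Laplacian

section Join

variable {n : ℕ} {G : SimpleGraph (Fin n)}

theorem joinOne_adj_castSucc {x y : Fin n} :
    (joinOne G).Adj x.castSucc y.castSucc ↔ G.Adj x y := by
  simpa [joinOne, x.isLt.ne, y.isLt.ne] using G.ne_of_adj

theorem isUniversal_joinOne_last : (joinOne G).IsUniversal (Fin.last n) :=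
  fun _ hy => ⟨hy, Or.inl rfl⟩

theorem isUniversal_joinOne_castSucc {x : Fin n} :
    (joinOne G).IsUniversal x.castSucc ↔ G.IsUniversal x := by
  simp only [SimpleGraph.IsUniversal, Fin.forall_fin_succ', joinOne_adj_castSucc,
    (Fin.castSucc_injective n).ne_iff, and_iff_left_iff_imp]
  exact fun _ hx => (isUniversal_joinOne_last hx.symm).symm

theorem isUniversal_joinOne_iff (hG : ∀ v, ¬ G.IsUniversal v) {x : Fin (n + 1)} :
    (joinOne G).IsUniversal x ↔ x = Fin.last n := by
  induction x using Fin.lastCases with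
  | last => simp [isUniversal_joinOne_last]
  | cast x => simp [isUniversal_joinOne_castSucc, hG x, Fin.castSucc_ne_last]

theorem exists_perm_castSucc {σ : Equiv.Perm (Fin (n + 1))} (hσ : σ (Fin.last n) = Fin.last n) :
    ∃ τ : Equiv.Perm (Fin n), ∀ x, σ x.castSucc = (τ x).castSucc := by
  have hne (x : Fin n) : σ x.castSucc ≠ Fin.last n := fun hx =>
    x.castSucc_ne_last (σ.injective (hx.trans hσ.symm))
  choose f hf using fun x => Fin.exists_castSucc_eq.2 (hne x)
  have hinj : Function.Injective f := fun x y hxy =>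
    Fin.castSucc_injective n (σ.injective (by rw [← hf, ← hf, hxy]))
  exact ⟨Equiv.ofBijective f hinj.bijective_of_finite, fun x => (hf x).symm⟩

theorem isGraphAut_joinOne_iff {σ : Equiv.Perm (Fin (n + 1))} {τ : Equiv.Perm (Fin n)}
    (hlast : σ (Fin.last n) = Fin.last n) (hσ : ∀ x, σ x.castSucc = (τ x).castSucc) :
    IsGraphAut (joinOne G) σ ↔ IsGraphAut G τ := by
  have hadj (x : Fin n) : (joinOne G).Adj (Fin.last n) x.castSucc :=
    isUniversal_joinOne_last x.castSucc_ne_last.symm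
  simp [IsGraphAut, Fin.forall_fin_succ', hlast, hσ, joinOne_adj_castSucc, hadj, (hadj _).symm]

theorem IsGraphAut.map_last {σ : Equiv.Perm (Fin (n + 1))} (hσ : IsGraphAut (joinOne G) σ)
    (hG : ∀ v, ¬ G.IsUniversal v) : σ (Fin.last n) = Fin.last n := by
  let e : joinOne G ≃g joinOne G := ⟨σ, (hσ _ _).symm⟩
  exact (isUniversal_joinOne_iff hG).1 ((isUniversal_map_iff e).2 isUniversal_joinOne_last)

end Join

theorem stmt7_general {n : ℕ} (G : SimpleGraph (Fin n)) (hG : ∀ v, ¬ G.IsUniversal v)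
    (σ : Equiv.Perm (Fin (n + 1))) :
    IsGraphAut (joinOne G) σ ↔
      (σ (Fin.last n) = Fin.last n ∧
        ∃ τ : Equiv.Perm (Fin n), IsGraphAut G τ ∧
          ∀ x : Fin n, σ x.castSucc = (τ x).castSucc) := by
  constructor
  · intro hσ
    have hlast := hσ.map_last hG
    obtain ⟨τ, hτ⟩ := exists_perm_castSucc hlast
    exact ⟨hlast, τ, (isGraphAut_joinOne_iff hlast hτ).1 hσ, hτ⟩
  · rintro ⟨hlast, τ, hτ, hστ⟩
    exact (isGraphAut_joinOne_iff hlast hστ).2 hτ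

theorem stmt7 {n : ℕ} (G : SimpleGraph (Fin n)) (hG : StronglyUncontrollable G)
    (hrad : ∀ μ : ℝ, IsEigenvalue (lap G) μ → μ < n)
    (σ : Equiv.Perm (Fin (n + 1))) :
    IsGraphAut (joinOne G) σ ↔
      (σ (Fin.last n) = Fin.last n ∧
        ∃ τ : Equiv.Perm (Fin n), IsGraphAut G τ ∧
          ∀ x : Fin n, σ x.castSucc = (τ x).castSucc) := by
  exact stmt7_general G
    (fun _ hv => (hrad n (isEigenvalue_lap_of_isUniversal hG.ne_one hv)).false) σ
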